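/- arXiv:1808.04254 — 2 statements merged into one kernel-verified Lean document; each statement's English description precedes it below -/
import Mathlib

section
/- In the Korean homophonic quotient group G_K, the images of the vowels I (ㅣ), EU (ㅡ), E (ㅔ), YE (ㅖ), and UI (ㅢ) each equal the identity. -/
/-- The 40 Korean characters: 19 consonants followed by 21 vowels. -/
inductive KChar
  -- consonants: ㄱ ㄲ ㄴ ㄷ ㄸ ㄹ ㅁ ㅂ ㅃ ㅅ ㅆ ㅇ ㅈ ㅉ ㅊ ㅋ ㅌ ㅍ ㅎ
  | G | GG | N | D | DD | L | M | B | BB | S | SS | NG | J | JJ | CH | K | T | P | H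
  -- vowels: ㅏ ㅐ ㅑ ㅒ ㅓ ㅔ ㅕ ㅖ ㅗ ㅘ ㅙ ㅚ ㅛ ㅜ ㅝ ㅞ ㅟ ㅠ ㅡ ㅢ ㅣ
  | A | AE | YA | YAE | EO | E | YEO | YE | O | WA | WAE | OE | YO | U | WO | WE | WI | YU | EU | UI | I
  deriving DecidableEq

open KChar

/-- A word, read as the ordered product of its characters in the free group. -/
def kWord (l : List KChar) : FreeGroup KChar :=
  (l.map FreeGroup.of).prod

/-- The 37 relators W₁ * W₂⁻¹ coming from the Korean homophone relations W₁ = W₂. -/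
def koreanRels : Set (FreeGroup KChar) :=
  { kWord [NG,A,N,NG,I,L,H,A,D,A] * (kWord [NG,A,N,I,L,H,A,D,A])⁻¹,
    kWord [B,U,NG,EO,K] * (kWord [B,U,NG,EO,G])⁻¹,
    kWord [B,A,GG] * (kWord [B,A,G])⁻¹,
    kWord [N,A,S] * (kWord [N,A,D])⁻¹,
    kWord [N,A,J] * (kWord [N,A,D])⁻¹,
    kWord [N,A,CH] * (kWord [N,A,D])⁻¹,
    kWord [B,A,T] * (kWord [B,A,D])⁻¹,
    kWord [B,U,L,S,O] * (kWord [B,U,L,SS,O])⁻¹,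
    kWord [J,I,P] * (kWord [J,I,B])⁻¹,
    kWord [NG,A,P,M,A,D,A,NG] * (kWord [NG,A,M,M,A,D,A,NG])⁻¹,
    kWord [NG,I,SS,N,EU,N] * (kWord [NG,I,N,N,EU,N])⁻¹,
    kWord [G,U,G,M,U,L] * (kWord [G,U,NG,M,U,L])⁻¹,
    kWord [N,O,H,N,EU,N] * (kWord [N,O,N,N,EU,N])⁻¹,
    kWord [S,U,T,H,A,D,A] * (kWord [S,U,T,A,D,A])⁻¹,
    kWord [NG,U,S,D,A] * (kWord [NG,U,D,DD,A])⁻¹,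
    kWord [NG,YA,G,J,I] * (kWord [NG,YA,G,JJ,I])⁻¹,
    kWord [M,A,G,L,O,N] * (kWord [M,A,NG,N,O,N])⁻¹,
    kWord [G,U,G,B,A,B] * (kWord [G,U,G,BB,A,B])⁻¹,
    kWord [N,EO,L,B,D,A] * (kWord [N,EO,L,DD,A])⁻¹,
    kWord [G,A,J,I,NG,EO] * (kWord [G,A,J,YEO])⁻¹,
    kWord [G,A,J,YEO] * (kWord [G,A,J,EO])⁻¹,
    kWord [T,O,NG,G,YE] * (kWord [T,O,NG,G,E])⁻¹,
    kWord [H,UI,M,I] * (kWord [H,I,M,I])⁻¹,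
    kWord [G,EU,M,G,OE] * (kWord [G,EU,M,G,WE])⁻¹,
    kWord [N,U,NG,I,D,A] * (kWord [N,WI,D,A])⁻¹,
    kWord [D,OE,NG,EO] * (kWord [D,WAE])⁻¹,
    kWord [SS,A,NG,I,D,A] * (kWord [SS,AE,D,A])⁻¹,
    kWord [T,EU,NG,I,D,A] * (kWord [T,UI,D,A])⁻¹,
    kWord [T,UI,D,A] * (kWord [T,I,D,A])⁻¹,
    kWord [M,I,NG,A] * (kWord [M,YA])⁻¹,
    kWord [SS,O,NG,I,D,A] * (kWord [SS,OE,D,A])⁻¹,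
    kWord [WAE] * (kWord [O,AE])⁻¹,
    kWord [WO] * (kWord [U,EO])⁻¹,
    kWord [YO] * (kWord [I,O])⁻¹,
    kWord [YU] * (kWord [I,U])⁻¹,
    kWord [UI] * (kWord [E])⁻¹,
    kWord [WA] * (kWord [O,A])⁻¹ }

/-- The Korean homophonic quotient group. -/
abbrev KoreanGroup := PresentedGroup koreanRels

/-!
A homophone relation `p·u·s = p·v·s` says `u = v` in the quotient. Numbering the relators in the
order of `koreanRels`: (1) kills `NG`; then (20) and (21) read `I·NG·EO = YEO = EO` and kill `I`;
next (29) reads `UI = I`, (36) reads `UI = E` and (22) reads `YE = E`; finally (28) reads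
`EU·NG·I = UI` and kills `EU`.
-/

section

open PresentedGroup (mk of)

theorem mk_eq_mk_of_mul_mul_mul_inv_mem {α : Type*} {rels : Set (FreeGroup α)}
    {p u v s : FreeGroup α} (h : p * u * s * (p * v * s)⁻¹ ∈ rels) : mk rels u = mk rels v := by
  simpa only [map_mul, mul_left_inj, mul_right_inj] using PresentedGroup.mk_eq_mk_of_mul_inv_mem h

theorem kWord_append (v w : List KChar) : kWord (v ++ w) = kWord v * kWord w := by
  simp only [kWord, List.map_append, List.prod_append]

theorem mk_kWord (rels : Set (FreeGroup KChar)) (w : List KChar) :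
    mk rels (kWord w) = (w.map (of (rels := rels))).prod := by
  rw [kWord, map_list_prod, List.map_map]
  rfl

theorem prod_map_of_eq_of_append_mem {rels : Set (FreeGroup KChar)} (p u v s : List KChar)
    (h : kWord (p ++ u ++ s) * (kWord (p ++ v ++ s))⁻¹ ∈ rels) :
    (u.map (of (rels := rels))).prod = (v.map (of (rels := rels))).prod := by
  simp only [kWord_append] at h
  simpa only [mk_kWord] using mk_eq_mk_of_mul_mul_mul_inv_mem h

namespace KoreanGroup

theorem of_NG_eq_one : (of NG : KoreanGroup) = 1 := by
  simpa using prod_map_of_eq_of_append_mem (rels := koreanRels)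
    [NG, A, N] [NG] [] [I, L, H, A, D, A] (by simp [koreanRels])

theorem of_I_eq_one : (of I : KoreanGroup) = 1 := by
  have hYEO : (of I * (of NG * of EO) : KoreanGroup) = of YEO := by
    simpa using prod_map_of_eq_of_append_mem (rels := koreanRels)
      [G, A, J] [I, NG, EO] [YEO] [] (by simp [koreanRels])
  have hEO : (of YEO : KoreanGroup) = of EO := by
    simpa using prod_map_of_eq_of_append_mem (rels := koreanRels)
      [G, A, J] [YEO] [EO] [] (by simp [koreanRels])
  rwa [of_NG_eq_one, one_mul, hEO, mul_eq_right] at hYEO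

theorem of_UI_eq_one : (of UI : KoreanGroup) = 1 := by
  have hUI : (of UI : KoreanGroup) = of I := by
    simpa using prod_map_of_eq_of_append_mem (rels := koreanRels)
      [T] [UI] [I] [D, A] (by simp [koreanRels])
  exact hUI.trans of_I_eq_one

theorem of_E_eq_one : (of E : KoreanGroup) = 1 := by
  have hUI : (of UI : KoreanGroup) = of E := by
    simpa using prod_map_of_eq_of_append_mem (rels := koreanRels)
      [] [UI] [E] [] (by simp [koreanRels])
  exact hUI.symm.trans of_UI_eq_one

theorem of_YE_eq_one : (of YE : KoreanGroup) = 1 := by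
  have hYE : (of YE : KoreanGroup) = of E := by
    simpa using prod_map_of_eq_of_append_mem (rels := koreanRels)
      [T, O, NG, G] [YE] [E] [] (by simp [koreanRels])
  exact hYE.trans of_E_eq_one

theorem of_EU_eq_one : (of EU : KoreanGroup) = 1 := by
  have hUI : (of EU * (of NG * of I) : KoreanGroup) = of UI := by
    simpa using prod_map_of_eq_of_append_mem (rels := koreanRels)
      [T] [EU, NG, I] [UI] [D, A] (by simp [koreanRels])
  rwa [of_NG_eq_one, of_I_eq_one, of_UI_eq_one, mul_one, mul_one] at hUI

end KoreanGroup

end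

/-- In the Korean homophonic quotient group, the images of the vowels
ㅣ (I), ㅡ (EU), ㅔ (E), ㅖ (YE), and ㅢ (UI) each equal the identity. -/
theorem korean_trivial_vowels :
    (PresentedGroup.of I : KoreanGroup) = 1 ∧
    (PresentedGroup.of EU : KoreanGroup) = 1 ∧
    (PresentedGroup.of E : KoreanGroup) = 1 ∧
    (PresentedGroup.of YE : KoreanGroup) = 1 ∧
    (PresentedGroup.of UI : KoreanGroup) = 1 :=
  ⟨KoreanGroup.of_I_eq_one, KoreanGroup.of_EU_eq_one, KoreanGroup.of_E_eq_one,
    KoreanGroup.of_YE_eq_one, KoreanGroup.of_UI_eq_one⟩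
end

section
/- In the Turkish homophonic quotient group G_T, the image of the letter a equals b·e·y⁻¹·e⁻¹·b⁻¹ (where b, e, y denote the images of those letters); in particular the images of a and ı lie in the subgroup of G_T generated by the images of b, e, and y. -/
/-- The 29 letters of the Modern Turkish alphabet:
a, b, c, ç (`cc`), d, e, f, g, ğ (`gg`, soft g), h, ı (`ii`, dotless i), i, j, k,
l, m, n, o, ö (`oo`), p, r, s, ş (`ss`), t, u, ü (`uu`), v, y, z. -/
inductive TLetter
  | a | b | c
  | cc -- ç
  | d | e | f | g
  | gg -- ğ (soft g)
  | h
  | ii -- ı (dotless i)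
  | i | j | k | l | m | n | o
  | oo -- ö
  | p | r | s
  | ss -- ş
  | t | u
  | uu -- ü
  | v | y | z
  deriving DecidableEq

open TLetter

/-- A word, read as the ordered product of its letters in the free group. -/
def tWord (l : List TLetter) : FreeGroup TLetter :=
  (l.map FreeGroup.of).prod

/-- The relators A * B⁻¹ coming from the Turkish homophone pairs (A, B). -/
def turkishRels : Set (FreeGroup TLetter) :=
  { tWord [k,a,a,n] * (tWord [k,a,gg,a,n])⁻¹,               -- kaan / kağan
    tWord [d,e,r,s,h,a,n,e] * (tWord [d,e,r,s,a,n,e])⁻¹,    -- dershane / dersane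
    tWord [h,a,c,e,t,t,e,p,e] * (tWord [h,a,c,e,t,e,p,e])⁻¹, -- hacettepe / hacetepe
    tWord [a,n,ii,t,t,e,p,e] * (tWord [a,n,ii,t,e,p,e])⁻¹,  -- anıttepe / anıtepe
    tWord [b,a,k,a,y,ii,m] * (tWord [b,a,k,ii,y,ii,m])⁻¹,   -- bakayım / bakıyım
    tWord [i,cc,e,c,e,k] * (tWord [i,cc,i,c,e,k])⁻¹,        -- içecek / içicek
    tWord [a,gg,a,b,e,y] * (tWord [a,b,i])⁻¹ }              -- ağabey / abi

/-- The Turkish homophonic quotient group. -/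
abbrev TurkishGroup := PresentedGroup turkishRels

section

variable {α : Type*} {rels : Set (FreeGroup α)}

theorem mk_prod_map_of (l : List α) :
    PresentedGroup.mk rels (l.map FreeGroup.of).prod = (l.map PresentedGroup.of).prod := by
  rw [map_list_prod, List.map_map]
  rfl

theorem prod_map_of_eq_of_mul_inv_mem {A B : List α}
    (h : (A.map FreeGroup.of).prod * (B.map FreeGroup.of).prod⁻¹ ∈ rels) :
    (A.map (PresentedGroup.of (rels := rels))).prod = (B.map PresentedGroup.of).prod := by
  simpa only [mk_prod_map_of] using PresentedGroup.mk_eq_mk_of_mul_inv_mem h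

end

namespace TurkishGroup

open PresentedGroup

theorem of_gg : (of gg : TurkishGroup) = 1 := by
  have kaan : tWord [k,a,a,n] * (tWord [k,a,gg,a,n])⁻¹ ∈ turkishRels := by
    simp [turkishRels]
  simpa using prod_map_of_eq_of_mul_inv_mem kaan

theorem of_ii : (of ii : TurkishGroup) = of a := by
  have bakayim : tWord [b,a,k,a,y,ii,m] * (tWord [b,a,k,ii,y,ii,m])⁻¹ ∈ turkishRels := by
    simp [turkishRels]
  simpa using (prod_map_of_eq_of_mul_inv_mem bakayim).symm

theorem of_i : (of i : TurkishGroup) = of e := by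
  have icecek : tWord [i,cc,e,c,e,k] * (tWord [i,cc,i,c,e,k])⁻¹ ∈ turkishRels := by
    simp [turkishRels]
  simpa using (prod_map_of_eq_of_mul_inv_mem icecek).symm

theorem of_a : (of a : TurkishGroup) = of b * of e * (of y)⁻¹ * (of e)⁻¹ * (of b)⁻¹ := by
  have agabey : tWord [a,gg,a,b,e,y] * (tWord [a,b,i])⁻¹ ∈ turkishRels := by
    simp [turkishRels]
  have a_mul_bey : (of a * (of b * (of e * of y)) : TurkishGroup) = of b * of e := by
    simpa [of_gg, of_i] using prod_map_of_eq_of_mul_inv_mem agabey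
  simpa only [mul_inv_rev, mul_assoc] using eq_mul_inv_of_mul_eq a_mul_bey

theorem of_a_mem_closure :
    (of a : TurkishGroup) ∈ Subgroup.closure {(of b : TurkishGroup), of e, of y} := by
  have generators := Subgroup.subset_closure (k := {(of b : TurkishGroup), of e, of y})
  simp only [Set.insert_subset_iff, Set.singleton_subset_iff, SetLike.mem_coe] at generators
  obtain ⟨hb, he, hy⟩ := generators
  rw [of_a]
  exact mul_mem (mul_mem (mul_mem (mul_mem hb he) (inv_mem hy)) (inv_mem he)) (inv_mem hb)

end TurkishGroup

/-- In the Turkish homophonic quotient group, a = b·e·y⁻¹·e⁻¹·b⁻¹; in particular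
the images of a and ı lie in the subgroup generated by the images of b, e, y. -/
theorem turkish_a_in_terms_of_b_e_y :
    (PresentedGroup.of a : TurkishGroup) =
      PresentedGroup.of b * PresentedGroup.of e * (PresentedGroup.of y)⁻¹ *
        (PresentedGroup.of e)⁻¹ * (PresentedGroup.of b)⁻¹ ∧
    (PresentedGroup.of a : TurkishGroup) ∈
      Subgroup.closure {(PresentedGroup.of b : TurkishGroup),
        PresentedGroup.of e, PresentedGroup.of y} ∧
    (PresentedGroup.of ii : TurkishGroup) ∈
      Subgroup.closure {(PresentedGroup.of b : TurkishGroup),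
        PresentedGroup.of e, PresentedGroup.of y} := by
  exact ⟨TurkishGroup.of_a, TurkishGroup.of_a_mem_closure,
    TurkishGroup.of_ii ▸ TurkishGroup.of_a_mem_closure⟩
end
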